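/- For 0 < b < 2, n, γ ≥ 0 and k ∈ {0,1}: if F(s,x,v) satisfies |F(s,x,v)| ≤ s^{-k/2} e^{-bs}(1+|x|²)^{-n}(1+|v|)^{-γ}, then the Duhamel integral satisfies |∫₀ᵗ (G₁(t-s) * F(s))(x,v) ds| ≤ C e^{-bt} (1+|x|²)^{-n} (1+|v|)^{-γ-1} for all t > 0, where G₁ is the explicit kernel of the damped kinetic Fokker-Planck equation. -/

import Mathlib

open MeasureTheory Real

noncomputable section

abbrev E3 := EuclideanSpace ℝ (Fin 3)

/-- `D(t) = ½( t(1 - e^{-2t}) - 2(1 - e^{-t})² )`. -/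
def Dfun (t : ℝ) : ℝ :=
  (t * (1 - Real.exp (-(2 * t))) - 2 * (1 - Real.exp (-t)) ^ 2) / 2

/-- The explicit Green's function `G₁(t,x,v;y,u)` of the damped kinetic
Fokker–Planck equation `∂_t g + v·∇_x g - Lg + 2g = 0`. -/
def G1ker (t : ℝ) (x v y u : E3) : ℝ :=
  (2 * Real.pi) ^ (-(6 : ℝ)) * (Real.pi / Real.sqrt (Dfun t)) ^ (3 : ℕ) *
    Real.exp
      (-((1 - Real.exp (-(2 * t))) / (8 * Dfun t) *
            ‖x - y - ((1 - Real.exp (-t)) / (1 + Real.exp (-t))) • (v + u)‖ ^ 2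
          + (1 + Real.exp (-(2 * t))) / (4 * (1 - Real.exp (-(2 * t)))) *
            ‖(2 * Real.exp (-t) / (1 + Real.exp (-(2 * t)))) • v - u‖ ^ 2
          + (1 - Real.exp (-(2 * t))) / (4 * (1 + Real.exp (-(2 * t)))) * ‖v‖ ^ 2
          + 2 * t))

/-!
Write `G₁ = N(t) e^{-2t} e^{-Φ}`, where `Φ` is the quadratic form `G1ker.phase` and `N(t)` is the
normalization, of order `D(t)^{-3/2}`. The form controls displacements: `|v - u|² ≲ Φ` and
`|x - y|² ≲ (1 + t) Φ`. Hence moving a polynomial weight from `(y, u)` to `(x, v)` costs a power of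
`1 + t` times a power of `1 + Φ`, and half of the Gaussian absorbs the latter.

The other half factors after the shear `y ↦ x - y - m(v + u)`. The two Gaussian masses multiplied by
`N(t)` stay bounded in `t`, because `D(t)` times the rates of the two squares is
`(1 + e^{-2t}) / 32`. The remaining factor `e^{-c(t)|v|²}` yields the additional `(1 + |v|)^{-1}`
at the price `(1 + t) t^{-1/2}`.

For `b < β < 2` all powers of `1 + t` are absorbed in `e^{-(2-β)t}`, which leaves the time integral
`∫₀ᵗ s^{-κ} (t-s)^{-1/2} e^{-(β-b)(t-s)} ds`. It is bounded uniformly in `t` because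
`s^{-κ} ≤ 1 + s^{-1/2}` and `∫₀ᵗ s^{-1/2} (t-s)^{-1/2} ds` is scale invariant.
-/

section RealBounds

lemma exists_one_add_rpow_le_mul_exp (p : ℝ) {ε : ℝ} (hε : 0 < ε) :
    ∃ C : ℝ, 0 < C ∧ ∀ r : ℝ, 0 ≤ r → (1 + r) ^ p ≤ C * exp (ε * r) := by
  set δ := ε / (|p| + 1) with hδ
  have hδ_pos : 0 < δ := by positivity
  refine ⟨(1 + δ⁻¹) ^ (|p| + 1), by positivity, fun r hr => ?_⟩
  have one_add_le : 1 + r ≤ (1 + δ⁻¹) * exp (δ * r) :=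
    calc 1 + r ≤ 1 + r + (δ * r + δ⁻¹) := le_add_of_nonneg_right (by positivity)
      _ = (1 + δ⁻¹) * (δ * r + 1) := by field_simp; ring
      _ ≤ (1 + δ⁻¹) * exp (δ * r) := by gcongr; exact add_one_le_exp _
  calc (1 + r) ^ p ≤ (1 + r) ^ (|p| + 1) :=
        rpow_le_rpow_of_exponent_le (by linarith) (by linarith [le_abs_self p])
    _ ≤ ((1 + δ⁻¹) * exp (δ * r)) ^ (|p| + 1) := by gcongr
    _ = (1 + δ⁻¹) ^ (|p| + 1) * exp (ε * r) := by
        rw [mul_rpow (by positivity) (exp_pos _).le, ← exp_mul, hδ]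
        congr 2
        field_simp

lemma rpow_le_rpow_abs_mul_rpow {a b R : ℝ} (ha : 0 < a) (hb : 0 < b) (hR : 0 < R)
    (hab : a ≤ R * b) (hba : b ≤ R * a) (q : ℝ) : a ^ q ≤ R ^ |q| * b ^ q := by
  obtain hq | hq := le_total 0 q
  · rw [abs_of_nonneg hq, ← mul_rpow hR.le hb.le]
    gcongr
  · rw [abs_of_nonpos hq, rpow_neg hR.le, ← inv_rpow hR.le, ← mul_rpow (by positivity) hb.le]
    exact rpow_le_rpow_of_nonpos (by positivity) ((inv_mul_le_iff₀ hR).2 hba) hq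

lemma one_add_mul_exp_neg_mul_sq_le {θ : ℝ} (hθ₀ : 0 < θ) (hθ₁ : θ ≤ 1) (r : ℝ) :
    (1 + r) * exp (-(θ * r ^ 2)) ≤ 2 / √θ := by
  have sqrt_le_one : √θ ≤ 1 := sqrt_le_one.2 hθ₁
  have mul_le : (1 + r) * √θ ≤ 2 * exp (θ * r ^ 2) :=
    calc (1 + r) * √θ ≤ 2 * ((√θ * r) ^ 2 + 1) := by
          nlinarith [sq_nonneg (2 * (√θ * r) - 1)]
      _ = 2 * (θ * r ^ 2 + 1) := by rw [mul_pow, sq_sqrt hθ₀.le]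
      _ ≤ 2 * exp (θ * r ^ 2) := by gcongr; exact add_one_le_exp _
  rw [exp_neg, ← div_eq_mul_inv, div_le_div_iff₀ (exp_pos _) (sqrt_pos.2 hθ₀)]
  exact mul_le

end RealBounds

section TimeIntegral

lemma setLIntegral_Ioo_comp_sub_left (f : ℝ → ENNReal) (t : ℝ) :
    ∫⁻ s in Set.Ioo 0 t, f (t - s) = ∫⁻ s in Set.Ioo 0 t, f s := by
  rw [← (Measure.measurePreserving_sub_left volume t).setLIntegral_comp_preimage_emb
    (MeasurableEquiv.subLeft t).measurableEmbedding f]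
  simp

lemma setLIntegral_Ioo_rpow {p t : ℝ} (hp : -1 < p) (ht : 0 ≤ t) :
    ∫⁻ s in Set.Ioo 0 t, ENNReal.ofReal (s ^ p) = ENNReal.ofReal (t ^ (p + 1) / (p + 1)) := by
  have integral_eq : ∫ s in (0 : ℝ)..t, s ^ p = t ^ (p + 1) / (p + 1) := by
    rw [integral_rpow (.inl hp), zero_rpow (by linarith), sub_zero]
  rw [restrict_Ioo_eq_restrict_Ioc, ← integral_eq, intervalIntegral.integral_of_le ht,
    ofReal_integral_eq_lintegral_ofReal
      (intervalIntegral.intervalIntegrable_rpow' hp).1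
      (ae_restrict_of_forall_mem measurableSet_Ioc fun s hs => rpow_nonneg hs.1.le _)]

lemma rpow_neg_mul_rpow_neg_le {p s r : ℝ} (hp₀ : 0 ≤ p) (hp₁ : p ≤ 1) (hs : 0 < s) (hr : 0 < r) :
    s ^ (-p) * r ^ (-p) ≤ (s + r) ^ (-p) * (s ^ (-p) + r ^ (-p)) := by
  have subadd : (s + r) ^ p ≤ s ^ p + r ^ p := rpow_add_le_add_rpow hs.le hr.le hp₀ hp₁
  simp only [rpow_neg, hs.le, hr.le, (add_pos hs hr).le]
  rw [← mul_inv, inv_add_inv (by positivity) (by positivity), ← div_eq_inv_mul,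
    le_div_iff₀ (by positivity), ← div_eq_inv_mul]
  gcongr

lemma setLIntegral_Ioo_rpow_neg_mul_rpow_neg_le {p t : ℝ} (hp₀ : 0 ≤ p) (hp₁ : p < 1)
    (ht : 0 < t) :
    ∫⁻ s in Set.Ioo 0 t, ENNReal.ofReal (s ^ (-p) * (t - s) ^ (-p)) ≤
      ENNReal.ofReal (2 * t ^ (1 - 2 * p) / (1 - p)) := by
  calc ∫⁻ s in Set.Ioo 0 t, ENNReal.ofReal (s ^ (-p) * (t - s) ^ (-p))
    _ ≤ ∫⁻ s in Set.Ioo 0 t, ENNReal.ofReal (t ^ (-p)) *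
          (ENNReal.ofReal (s ^ (-p)) + ENNReal.ofReal ((t - s) ^ (-p))) := by
        refine setLIntegral_mono' measurableSet_Ioo fun s ⟨hs, hst⟩ => ?_
        have hr : 0 < t - s := sub_pos.2 hst
        rw [← ENNReal.ofReal_add (by positivity) (by positivity),
          ← ENNReal.ofReal_mul (by positivity)]
        simpa only [add_sub_cancel] using
          ENNReal.ofReal_le_ofReal (rpow_neg_mul_rpow_neg_le hp₀ hp₁.le hs hr)
    _ = ENNReal.ofReal (t ^ (-p) * (2 * (t ^ (1 - p) / (1 - p)))) := by
        rw [lintegral_const_mul' _ _ ENNReal.ofReal_ne_top, lintegral_add_left (by fun_prop),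
          setLIntegral_Ioo_comp_sub_left (fun s => ENNReal.ofReal (s ^ (-p))),
          setLIntegral_Ioo_rpow (by linarith) ht.le, neg_add_eq_sub,
          ← ENNReal.ofReal_add (by positivity) (by positivity),
          ← ENNReal.ofReal_mul (by positivity), two_mul]
    _ = ENNReal.ofReal (2 * t ^ (1 - 2 * p) / (1 - p)) := by
        rw [show 1 - 2 * p = -p + (1 - p) by ring, rpow_add ht]
        congr 1
        ring

lemma setLIntegral_Ioo_rpow_mul_exp_neg_mul_le {p δ : ℝ} (hp : -1 < p) (hδ : 0 < δ) (t : ℝ) :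
    ∫⁻ s in Set.Ioo 0 t, ENNReal.ofReal (s ^ p * exp (-(δ * s))) ≤
      ENNReal.ofReal ((1 / δ) ^ (p + 1) * Gamma (p + 1)) := by
  have integral_eq : ∫ s in Set.Ioi 0, s ^ p * exp (-(δ * s)) =
      (1 / δ) ^ (p + 1) * Gamma (p + 1) := by
    simpa only [add_sub_cancel_right] using
      integral_rpow_mul_exp_neg_mul_Ioi (a := p + 1) (by linarith) hδ
  have integrable : IntegrableOn (fun s => s ^ p * exp (-(δ * s))) (Set.Ioi 0) := by
    simpa only [rpow_one, neg_mul] using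
      integrableOn_rpow_mul_exp_neg_mul_rpow hp one_pos hδ
  rw [← integral_eq, ofReal_integral_eq_lintegral_ofReal integrable
    (ae_restrict_of_forall_mem measurableSet_Ioi fun s hs =>
      mul_nonneg (rpow_nonneg (le_of_lt hs) _) (exp_pos _).le)]
  exact lintegral_mono_set Set.Ioo_subset_Ioi_self

lemma rpow_neg_le_one_add_rpow_neg {κ p s : ℝ} (hκ : 0 ≤ κ) (hκp : κ ≤ p) (hs : 0 < s) :
    s ^ (-κ) ≤ 1 + s ^ (-p) := by
  obtain h | h := le_total 1 s
  · exact (rpow_le_one_of_one_le_of_nonpos h (neg_nonpos.2 hκ)).trans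
      (le_add_of_nonneg_right (by positivity))
  · exact (rpow_le_rpow_of_exponent_ge hs h (neg_le_neg hκp)).trans
      (le_add_of_nonneg_left zero_le_one)

lemma exists_setLIntegral_Ioo_rpow_neg_mul_le {κ δ : ℝ} (hκ₀ : 0 ≤ κ) (hκ : κ ≤ 1 / 2)
    (hδ : 0 < δ) :
    ∃ C : ℝ, 0 < C ∧ ∀ t : ℝ, 0 < t →
      ∫⁻ s in Set.Ioo 0 t, ENNReal.ofReal
        (s ^ (-κ) * ((t - s) ^ (-(1 / 2) : ℝ) * exp (-(δ * (t - s))))) ≤ ENNReal.ofReal C := by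
  set I := (1 / δ) ^ (-(1 / 2) + 1 : ℝ) * Gamma (-(1 / 2) + 1)
  have hI : 0 < I := mul_pos (by positivity) (Gamma_pos_of_pos (by norm_num))
  refine ⟨I + 4, by positivity, fun t ht => ?_⟩
  have integrand_le : ∀ s ∈ Set.Ioo 0 t, ENNReal.ofReal
      (s ^ (-κ) * ((t - s) ^ (-(1 / 2) : ℝ) * exp (-(δ * (t - s))))) ≤
      ENNReal.ofReal ((t - s) ^ (-(1 / 2) : ℝ) * exp (-(δ * (t - s)))) +
        ENNReal.ofReal (s ^ (-(1 / 2) : ℝ) * (t - s) ^ (-(1 / 2) : ℝ)) := by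
    intro s ⟨hs, hst⟩
    have hr : 0 < t - s := sub_pos.2 hst
    rw [← ENNReal.ofReal_add (by positivity) (by positivity)]
    refine ENNReal.ofReal_le_ofReal ?_
    have exp_le_one : exp (-(δ * (t - s))) ≤ 1 := exp_le_one_iff.2 (by linarith [mul_pos hδ hr])
    calc s ^ (-κ) * ((t - s) ^ (-(1 / 2) : ℝ) * exp (-(δ * (t - s))))
      _ ≤ (1 + s ^ (-(1 / 2) : ℝ)) * ((t - s) ^ (-(1 / 2) : ℝ) * exp (-(δ * (t - s)))) := by
          gcongr
          exact rpow_neg_le_one_add_rpow_neg hκ₀ hκ hs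
      _ = (t - s) ^ (-(1 / 2) : ℝ) * exp (-(δ * (t - s))) +
            s ^ (-(1 / 2) : ℝ) * (t - s) ^ (-(1 / 2) : ℝ) * exp (-(δ * (t - s))) := by ring
      _ ≤ _ := add_le_add_right (mul_le_of_le_one_right (by positivity) exp_le_one) _
  calc _ ≤ _ := setLIntegral_mono' measurableSet_Ioo integrand_le
    _ ≤ ENNReal.ofReal I + ENNReal.ofReal 4 := by
        rw [lintegral_add_left (by fun_prop), setLIntegral_Ioo_comp_sub_left
          (fun s => ENNReal.ofReal (s ^ (-(1 / 2) : ℝ) * exp (-(δ * s))))]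
        gcongr
        · exact setLIntegral_Ioo_rpow_mul_exp_neg_mul_le (by norm_num) hδ t
        · refine (setLIntegral_Ioo_rpow_neg_mul_rpow_neg_le (by norm_num) (by norm_num) ht).trans ?_
          norm_num
    _ = ENNReal.ofReal (I + 4) := (ENNReal.ofReal_add hI.le (by norm_num)).symm

end TimeIntegral

section Gaussian

variable {E : Type*} [NormedAddCommGroup E] [InnerProductSpace ℝ E] [FiniteDimensional ℝ E]
  [MeasurableSpace E] [BorelSpace E]

lemma lintegral_exp_neg_mul_norm_sq {β : ℝ} (hβ : 0 < β) :
    ∫⁻ w : E, ENNReal.ofReal (exp (-(β * ‖w‖ ^ 2))) =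
      ENNReal.ofReal (√(π / β) ^ Module.finrank ℝ E) := by
  have integral_eq : ∫ w : E, exp (-(β * ‖w‖ ^ 2)) = √(π / β) ^ Module.finrank ℝ E := by
    simp_rw [← neg_mul, GaussianFourier.integral_rexp_neg_mul_sq_norm hβ,
      sqrt_eq_rpow, ← rpow_mul_natCast (div_pos pi_pos hβ).le, div_mul_eq_mul_div, one_mul]
  have integrable : Integrable fun w : E => exp (-(β * ‖w‖ ^ 2)) :=
    .of_integral_ne_zero (integral_eq ▸ by positivity)
  rw [← integral_eq, ofReal_integral_eq_lintegral_ofReal integrable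
    (.of_forall fun _ => by positivity)]

lemma lintegral_lintegral_exp_shear {α β : ℝ} (hα : 0 < α) (hβ : 0 < β) (m : ℝ) (x v v' : E) :
    ∫⁻ y : E, ∫⁻ u : E, ENNReal.ofReal
        (exp (-(α * ‖x - y - m • (v + u)‖ ^ 2)) * exp (-(β * ‖v' - u‖ ^ 2))) =
      ENNReal.ofReal ((√(π / α) * √(π / β)) ^ Module.finrank ℝ E) := by
  have inner_y (u : E) : ∫⁻ y : E, ENNReal.ofReal (exp (-(α * ‖x - y - m • (v + u)‖ ^ 2))) =
      ENNReal.ofReal (√(π / α) ^ Module.finrank ℝ E) := by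
    simp_rw [sub_right_comm x _ (m • (v + u))]
    rw [lintegral_sub_left_eq_self fun w : E => ENNReal.ofReal (exp (-(α * ‖w‖ ^ 2))),
      lintegral_exp_neg_mul_norm_sq hα]
  rw [lintegral_lintegral_swap (by fun_prop)]
  simp_rw [ENNReal.ofReal_mul (exp_pos _).le, lintegral_mul_const' _ _ ENNReal.ofReal_ne_top,
    inner_y, lintegral_const_mul' _ _ ENNReal.ofReal_ne_top]
  rw [lintegral_sub_left_eq_self fun w : E => ENNReal.ofReal (exp (-(β * ‖w‖ ^ 2))),
    lintegral_exp_neg_mul_norm_sq hβ, ← ENNReal.ofReal_mul (by positivity), mul_pow]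

end Gaussian

section PolyWeight

variable {E : Type*} [SeminormedAddCommGroup E]

/-- The polynomial weight `(1 + |x|²)^q (1 + |v|)^r` on phase space; the decay rates of the theorem
are `q = -n` and `r = -γ`. -/
def polyWeight (q r : ℝ) (x v : E) : ℝ :=
  (1 + ‖x‖ ^ 2) ^ q * (1 + ‖v‖) ^ r

lemma polyWeight_pos (q r : ℝ) (x v : E) : 0 < polyWeight q r x v := by
  unfold polyWeight
  positivity

lemma polyWeight_eq_mul (q r : ℝ) (x v : E) :
    polyWeight q r x v = polyWeight q (r - 1) x v * (1 + ‖v‖) := by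
  rw [polyWeight, polyWeight, mul_assoc, ← rpow_add_one (by positivity), sub_add_cancel]

lemma one_add_norm_sq_le (x y : E) :
    1 + ‖x‖ ^ 2 ≤ 2 * (1 + ‖x - y‖ ^ 2) * (1 + ‖y‖ ^ 2) :=
  calc 1 + ‖x‖ ^ 2 ≤ 1 + (‖x - y‖ + ‖y‖) ^ 2 := by
        gcongr
        exact norm_le_norm_sub_add x y
    _ ≤ 2 * (1 + ‖x - y‖ ^ 2) * (1 + ‖y‖ ^ 2) := by
        nlinarith [add_sq_le (a := ‖x - y‖) (b := ‖y‖),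
          mul_nonneg (sq_nonneg ‖x - y‖) (sq_nonneg ‖y‖)]

lemma one_add_norm_le (v u : E) : 1 + ‖v‖ ≤ (1 + ‖v - u‖) * (1 + ‖u‖) := by
  nlinarith [norm_le_norm_sub_add v u, mul_nonneg (norm_nonneg (v - u)) (norm_nonneg u)]

lemma polyWeight_le_mul_polyWeight (q r : ℝ) (x v y u : E) :
    polyWeight q r y u ≤
      (2 * (1 + ‖x - y‖ ^ 2)) ^ |q| * (1 + ‖v - u‖) ^ |r| * polyWeight q r x v := by
  have position : (1 + ‖y‖ ^ 2) ^ q ≤ (2 * (1 + ‖x - y‖ ^ 2)) ^ |q| * (1 + ‖x‖ ^ 2) ^ q :=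
    rpow_le_rpow_abs_mul_rpow (by positivity) (by positivity) (by positivity)
      (norm_sub_rev x y ▸ one_add_norm_sq_le y x) (one_add_norm_sq_le x y) q
  have velocity : (1 + ‖u‖) ^ r ≤ (1 + ‖v - u‖) ^ |r| * (1 + ‖v‖) ^ r :=
    rpow_le_rpow_abs_mul_rpow (by positivity) (by positivity) (by positivity)
      (norm_sub_rev v u ▸ one_add_norm_le u v) (one_add_norm_le v u) r
  calc polyWeight q r y u ≤ (2 * (1 + ‖x - y‖ ^ 2)) ^ |q| * (1 + ‖x‖ ^ 2) ^ q *
        ((1 + ‖v - u‖) ^ |r| * (1 + ‖v‖) ^ r) := by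
        unfold polyWeight
        gcongr
    _ = _ := by
        unfold polyWeight
        ring

end PolyWeight

section Coefficients

lemma exp_neg_lt_one {t : ℝ} (ht : 0 < t) : exp (-t) < 1 :=
  exp_lt_one_iff.2 (neg_lt_zero.2 ht)

lemma exp_neg_two_mul (t : ℝ) : exp (-(2 * t)) = exp (-t) ^ 2 := by
  rw [← exp_nat_mul, Nat.cast_ofNat, mul_neg]

lemma two_mul_one_sub_exp_neg_lt {t : ℝ} (ht : 0 < t) :
    2 * (1 - exp (-t)) < t * (1 + exp (-t)) := by
  have log_bound := lt_log_one_add_of_pos (sub_pos.2 (one_lt_exp_iff.2 ht))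
  rw [add_sub_cancel, log_exp, div_lt_iff₀ (by linarith [exp_pos t])] at log_bound
  have exp_mul_exp_neg : exp t * exp (-t) = 1 := by rw [← exp_add, add_neg_cancel, exp_zero]
  linear_combination exp (-t) * log_bound + (t - 2) * exp_mul_exp_neg

lemma Dfun_pos {t : ℝ} (ht : 0 < t) : 0 < Dfun t := by
  have factored : Dfun t =
      (1 - exp (-t)) * (t * (1 + exp (-t)) - 2 * (1 - exp (-t))) / 2 := by
    rw [Dfun, exp_neg_two_mul]
    ring
  rw [factored]
  exact half_pos (mul_pos (sub_pos.2 (exp_neg_lt_one ht))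
    (sub_pos.2 (two_mul_one_sub_exp_neg_lt ht)))

end Coefficients

namespace G1ker

/-- Coefficient of `‖x - y - shift t • (v + u)‖²` in the exponent of `G1ker t`. -/
def posRate (t : ℝ) : ℝ :=
  (1 - exp (-(2 * t))) / (8 * Dfun t)

/-- Coefficient of `‖slope t • v - u‖²` in the exponent of `G1ker t`; equals `coth t / 4`. -/
def velRate (t : ℝ) : ℝ :=
  (1 + exp (-(2 * t))) / (4 * (1 - exp (-(2 * t))))

/-- Coefficient of `‖v‖²` in the exponent of `G1ker t`; equals `tanh t / 4`, which is twice the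
paper's `c(t)`. -/
def dampRate (t : ℝ) : ℝ :=
  (1 - exp (-(2 * t))) / (4 * (1 + exp (-(2 * t))))

/-- The factor `tanh (t / 2)` of `v + u` in the position component of the exponent of `G1ker t`. -/
def shift (t : ℝ) : ℝ :=
  (1 - exp (-t)) / (1 + exp (-t))

/-- The factor `1 / cosh t` of `v` in the velocity component of the exponent of `G1ker t`. -/
def slope (t : ℝ) : ℝ :=
  2 * exp (-t) / (1 + exp (-(2 * t)))

section Coefficients

variable {t : ℝ}

lemma one_sub_exp_neg_two_mul_pos (ht : 0 < t) : 0 < 1 - exp (-(2 * t)) :=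
  sub_pos.2 (exp_neg_lt_one (by positivity))

lemma posRate_pos (ht : 0 < t) : 0 < posRate t :=
  div_pos (one_sub_exp_neg_two_mul_pos ht) (mul_pos (by norm_num) (Dfun_pos ht))

lemma one_le_four_mul_posRate (ht : 0 < t) : 1 ≤ 4 * t * posRate t := by
  rw [posRate, ← mul_div_assoc, one_le_div (mul_pos (by norm_num) (Dfun_pos ht)), Dfun]
  linarith [sq_nonneg (1 - exp (-t))]

lemma one_le_four_mul_velRate (ht : 0 < t) : 1 ≤ 4 * velRate t := by
  have := one_sub_exp_neg_two_mul_pos ht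
  rw [velRate, ← mul_div_assoc, one_le_div (by positivity)]
  linarith [exp_pos (-(2 * t))]

lemma velRate_pos (ht : 0 < t) : 0 < velRate t := by
  linarith [one_le_four_mul_velRate ht]

lemma dampRate_pos (ht : 0 < t) : 0 < dampRate t :=
  div_pos (one_sub_exp_neg_two_mul_pos ht) (by positivity)

lemma dampRate_le (t : ℝ) : dampRate t ≤ 1 / 4 := by
  rw [dampRate, div_le_div_iff₀ (by positivity) (by norm_num)]
  linarith [exp_pos (-(2 * t))]

lemma le_four_mul_dampRate (ht : 0 < t) : t / (1 + 2 * t) ≤ 4 * dampRate t := by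
  have exp_bound : (1 + 2 * t) * exp (-(2 * t)) ≤ 1 := by
    rw [exp_neg, ← div_eq_mul_inv, div_le_one (exp_pos _), add_comm]
    exact add_one_le_exp _
  rw [dampRate, ← mul_div_assoc, div_le_div_iff₀ (by positivity) (by positivity)]
  linarith [mul_pos ht (one_sub_exp_neg_two_mul_pos ht)]

lemma shift_nonneg (ht : 0 < t) : 0 ≤ shift t :=
  div_nonneg (sub_nonneg.2 (exp_neg_lt_one ht).le) (by positivity)

lemma shift_le_one (t : ℝ) : shift t ≤ 1 := by
  rw [shift, div_le_one (by positivity)]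
  linarith [exp_pos (-t)]

lemma shift_le_four_mul_dampRate (ht : 0 < t) : shift t ≤ 4 * dampRate t := by
  rw [shift, dampRate, ← mul_div_assoc, div_le_div_iff₀ (by positivity) (by positivity),
    exp_neg_two_mul]
  nlinarith [mul_pos (exp_pos (-t)) (sub_pos.2 (exp_neg_lt_one ht))]

lemma slope_nonneg (t : ℝ) : 0 ≤ slope t := by
  unfold slope
  positivity

lemma slope_le_one (t : ℝ) : slope t ≤ 1 := by
  rw [slope, div_le_one (by positivity), exp_neg_two_mul]
  linarith [two_mul_le_add_sq 1 (exp (-t))]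

lemma one_sub_slope_le_four_mul_dampRate (ht : 0 < t) : 1 - slope t ≤ 4 * dampRate t := by
  have h := exp_neg_lt_one ht
  rw [slope, dampRate, one_sub_div (by positivity), ← mul_div_assoc,
    div_le_div_iff₀ (by positivity) (by positivity), exp_neg_two_mul]
  nlinarith [mul_pos (exp_pos (-t)) (sub_pos.2 h), sq_nonneg (exp (-t))]

lemma Dfun_mul_posRate_mul_velRate (ht : 0 < t) :
    Dfun t * (posRate t * velRate t) = (1 + exp (-(2 * t))) / 32 := by
  have := (Dfun_pos ht).ne'
  have := (one_sub_exp_neg_two_mul_pos ht).ne'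
  rw [posRate, velRate]
  field_simp
  norm_num

end Coefficients

section Phase

variable {E : Type*} [SeminormedAddCommGroup E] [NormedSpace ℝ E] {t : ℝ}

/-- The quadratic form in the exponent of `G1ker t`, so that `G1ker t` is a multiple of
`exp (-phase t)`. -/
def phase (t : ℝ) (x v y u : E) : ℝ :=
  posRate t * ‖x - y - shift t • (v + u)‖ ^ 2 + velRate t * ‖slope t • v - u‖ ^ 2
    + dampRate t * ‖v‖ ^ 2

lemma phase_nonneg (ht : 0 < t) (x v y u : E) : 0 ≤ phase t x v y u := by
  have := posRate_pos ht
  have := velRate_pos ht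
  have := dampRate_pos ht
  unfold phase
  positivity

lemma posRate_mul_le_phase (ht : 0 < t) (x v y u : E) :
    posRate t * ‖x - y - shift t • (v + u)‖ ^ 2 ≤ phase t x v y u := by
  have := velRate_pos ht
  have := dampRate_pos ht
  rw [phase, add_assoc]
  exact le_add_of_nonneg_right (by positivity)

lemma velRate_mul_add_dampRate_mul_le_phase (ht : 0 < t) (x v y u : E) :
    velRate t * ‖slope t • v - u‖ ^ 2 + dampRate t * ‖v‖ ^ 2 ≤ phase t x v y u := by
  have := posRate_pos ht
  rw [phase, add_assoc]
  exact le_add_of_nonneg_left (by positivity)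

lemma norm_velocity_sub_sq_le (ht : 0 < t) (x v y u : E) :
    ‖v - u‖ ^ 2 ≤ 8 * phase t x v y u := by
  set p := slope t
  have hp : 0 ≤ 1 - p := sub_nonneg.2 (slope_le_one t)
  have triangle : ‖v - u‖ ≤ ‖p • v - u‖ + (1 - p) * ‖v‖ :=
    calc ‖v - u‖ = ‖(p • v - u) + (1 - p) • v‖ := by congr 1; module
      _ ≤ ‖p • v - u‖ + ‖(1 - p) • v‖ := norm_add_le _ _
      _ = ‖p • v - u‖ + (1 - p) * ‖v‖ := by rw [norm_smul, norm_of_nonneg hp]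
  have one_sub_sq_le : (1 - p) ^ 2 ≤ 4 * dampRate t :=
    (pow_le_of_le_one hp (sub_le_self _ (slope_nonneg t)) two_ne_zero).trans
      (one_sub_slope_le_four_mul_dampRate ht)
  calc ‖v - u‖ ^ 2 ≤ (‖p • v - u‖ + (1 - p) * ‖v‖) ^ 2 := by gcongr
    _ ≤ 2 * (‖p • v - u‖ ^ 2 + ((1 - p) * ‖v‖) ^ 2) := add_sq_le
    _ = 2 * (1 * ‖p • v - u‖ ^ 2 + (1 - p) ^ 2 * ‖v‖ ^ 2) := by rw [mul_pow, one_mul]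
    _ ≤ 2 * (4 * velRate t * ‖p • v - u‖ ^ 2 + 4 * dampRate t * ‖v‖ ^ 2) := by
        gcongr
        exact one_le_four_mul_velRate ht
    _ = 8 * (velRate t * ‖p • v - u‖ ^ 2 + dampRate t * ‖v‖ ^ 2) := by ring
    _ ≤ 8 * phase t x v y u := by
        gcongr
        exact velRate_mul_add_dampRate_mul_le_phase ht x v y u

lemma shift_sq_mul_norm_sq_le (ht : 0 < t) (x v y u : E) :
    shift t ^ 2 * ‖v‖ ^ 2 ≤ 4 * phase t x v y u := by
  have := velRate_pos ht
  calc shift t ^ 2 * ‖v‖ ^ 2 ≤ 4 * dampRate t * ‖v‖ ^ 2 := by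
        gcongr
        exact (pow_le_of_le_one (shift_nonneg ht) (shift_le_one t) two_ne_zero).trans
          (shift_le_four_mul_dampRate ht)
    _ = 4 * (dampRate t * ‖v‖ ^ 2) := mul_assoc _ _ _
    _ ≤ 4 * phase t x v y u := by
        gcongr
        exact (le_add_of_nonneg_left (by positivity)).trans
          (velRate_mul_add_dampRate_mul_le_phase ht x v y u)

lemma norm_position_sub_sq_le (ht : 0 < t) (x v y u : E) :
    ‖x - y‖ ^ 2 ≤ 96 * (1 + t) * phase t x v y u := by
  set m := shift t
  set w := x - y - m • (v + u) with hw
  have hm : 0 ≤ m := shift_nonneg ht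
  have hΦ := phase_nonneg ht x v y u
  have triangle : ‖x - y‖ ≤ ‖w‖ + m * (2 * ‖v‖ + ‖v - u‖) :=
    calc ‖x - y‖ = ‖w + m • ((2 : ℝ) • v - (v - u))‖ := by rw [hw]; congr 1; module
      _ ≤ ‖w‖ + ‖m • ((2 : ℝ) • v - (v - u))‖ := norm_add_le _ _
      _ = ‖w‖ + m * ‖(2 : ℝ) • v - (v - u)‖ := by rw [norm_smul, norm_of_nonneg hm]
      _ ≤ ‖w‖ + m * (‖(2 : ℝ) • v‖ + ‖v - u‖) := by gcongr; exact norm_sub_le _ _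
      _ = ‖w‖ + m * (2 * ‖v‖ + ‖v - u‖) := by rw [norm_smul, norm_ofNat]
  have w_bound : ‖w‖ ^ 2 ≤ 4 * t * phase t x v y u :=
    calc ‖w‖ ^ 2 ≤ 4 * t * posRate t * ‖w‖ ^ 2 :=
          le_mul_of_one_le_left (sq_nonneg _) (one_le_four_mul_posRate ht)
      _ = 4 * t * (posRate t * ‖w‖ ^ 2) := mul_assoc _ _ _
      _ ≤ 4 * t * phase t x v y u := by gcongr; exact posRate_mul_le_phase ht x v y u
  have v_bound : m ^ 2 * ‖v‖ ^ 2 ≤ 4 * phase t x v y u := shift_sq_mul_norm_sq_le ht x v y u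
  have diff_bound : m ^ 2 * ‖v - u‖ ^ 2 ≤ 8 * phase t x v y u :=
    (mul_le_of_le_one_left (sq_nonneg _) (pow_le_one₀ hm (shift_le_one t))).trans
      (norm_velocity_sub_sq_le ht x v y u)
  calc ‖x - y‖ ^ 2 ≤ (‖w‖ + m * (2 * ‖v‖ + ‖v - u‖)) ^ 2 := by gcongr
    _ ≤ 2 * (‖w‖ ^ 2 + m ^ 2 * (2 * ‖v‖ + ‖v - u‖) ^ 2) := by rw [← mul_pow]; exact add_sq_le
    _ ≤ 2 * (‖w‖ ^ 2 + m ^ 2 * (2 * ((2 * ‖v‖) ^ 2 + ‖v - u‖ ^ 2))) := by gcongr; exact add_sq_le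
    _ = 2 * ‖w‖ ^ 2 + 16 * (m ^ 2 * ‖v‖ ^ 2) + 4 * (m ^ 2 * ‖v - u‖ ^ 2) := by ring
    _ ≤ 96 * (1 + t) * phase t x v y u := by linarith [mul_nonneg ht.le hΦ]

lemma polyWeight_le_phase_mul (q r : ℝ) (ht : 0 < t) (x v y u : E) :
    polyWeight q r y u ≤ 192 ^ |q| * 16 ^ |r| * (1 + t) ^ |q| *
      (1 + phase t x v y u) ^ (|q| + |r|) * polyWeight q r x v := by
  set Φ := phase t x v y u
  have hΦ : 0 ≤ Φ := phase_nonneg ht x v y u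
  have position : 2 * (1 + ‖x - y‖ ^ 2) ≤ 192 * (1 + t) * (1 + Φ) := by
    linarith [norm_position_sub_sq_le ht x v y u]
  have velocity : 1 + ‖v - u‖ ≤ 16 * (1 + Φ) := by
    linarith [norm_velocity_sub_sq_le ht x v y u, two_mul_le_add_sq 1 ‖v - u‖]
  calc polyWeight q r y u
    _ ≤ (2 * (1 + ‖x - y‖ ^ 2)) ^ |q| * (1 + ‖v - u‖) ^ |r| * polyWeight q r x v :=
        polyWeight_le_mul_polyWeight q r x v y u
    _ ≤ (192 * (1 + t) * (1 + Φ)) ^ |q| * (16 * (1 + Φ)) ^ |r| * polyWeight q r x v := by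
        have := (polyWeight_pos q r x v).le
        gcongr
    _ = _ := by
        rw [mul_rpow (by positivity) (by positivity), mul_rpow (by positivity) (by positivity),
          mul_rpow (by positivity) (by positivity), rpow_add (by positivity)]
        ring

lemma exists_exp_neg_phase_mul_polyWeight_le (q r : ℝ) :
    ∃ K : ℝ, 0 < K ∧ ∀ t : ℝ, 0 < t → ∀ x v y u : E,
      exp (-phase t x v y u) * polyWeight q r y u ≤
        K * (1 + t) ^ |q| * polyWeight q r x v * exp (-(phase t x v y u / 2)) := by
  obtain ⟨C, hC, absorb⟩ := exists_one_add_rpow_le_mul_exp (|q| + |r|) one_half_pos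
  refine ⟨192 ^ |q| * 16 ^ |r| * C, by positivity, fun t ht x v y u => ?_⟩
  set Φ := phase t x v y u
  have hw := (polyWeight_pos q r x v).le
  calc exp (-Φ) * polyWeight q r y u
    _ ≤ exp (-Φ) * (192 ^ |q| * 16 ^ |r| * (1 + t) ^ |q| * (C * exp (1 / 2 * Φ)) *
          polyWeight q r x v) := by
        refine mul_le_mul_of_nonneg_left ?_ (exp_pos _).le
        refine (polyWeight_le_phase_mul q r ht x v y u).trans ?_
        gcongr
        exact absorb Φ (phase_nonneg ht x v y u)
    _ = 192 ^ |q| * 16 ^ |r| * C * (1 + t) ^ |q| * polyWeight q r x v *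
          (exp (-Φ) * exp (1 / 2 * Φ)) := by ring
    _ = _ := by
        rw [← exp_add]
        ring_nf

end Phase

section Integral

lemma lintegral_exp_neg_half_phase {E : Type*} [NormedAddCommGroup E] [InnerProductSpace ℝ E]
    [FiniteDimensional ℝ E] [MeasurableSpace E] [BorelSpace E] {t : ℝ} (ht : 0 < t) (x v : E) :
    ∫⁻ y : E, ∫⁻ u : E, ENNReal.ofReal (exp (-(phase t x v y u / 2))) =
      ENNReal.ofReal (exp (-(dampRate t / 2 * ‖v‖ ^ 2)) *
        (√(π / (posRate t / 2)) * √(π / (velRate t / 2))) ^ Module.finrank ℝ E) := by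
  have split (y u : E) : exp (-(phase t x v y u / 2)) = exp (-(dampRate t / 2 * ‖v‖ ^ 2)) *
      (exp (-(posRate t / 2 * ‖x - y - shift t • (v + u)‖ ^ 2)) *
        exp (-(velRate t / 2 * ‖slope t • v - u‖ ^ 2))) := by
    rw [phase, ← exp_add, ← exp_add]
    ring_nf
  simp_rw [split, ENNReal.ofReal_mul (exp_pos _).le (p := exp (-(dampRate t / 2 * ‖v‖ ^ 2))),
    lintegral_const_mul' _ _ ENNReal.ofReal_ne_top]
  rw [lintegral_lintegral_exp_shear (half_pos (posRate_pos ht)) (half_pos (velRate_pos ht))]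

lemma normalization_mul_sqrt_le {t : ℝ} (ht : 0 < t) :
    π / √(Dfun t) * (√(π / (posRate t / 2)) * √(π / (velRate t / 2))) ≤ 12 * π ^ 2 := by
  have ha := posRate_pos ht
  have hA := velRate_pos ht
  have mass_sq : π / (posRate t / 2) * (π / (velRate t / 2)) / Dfun t =
      128 * π ^ 2 / (1 + exp (-(2 * t))) := by
    calc _ = 4 * π ^ 2 / (Dfun t * (posRate t * velRate t)) := by field_simp; norm_num
      _ = _ := by rw [Dfun_mul_posRate_mul_velRate ht]; field_simp; norm_num
  have mass_le : √(128 * π ^ 2 / (1 + exp (-(2 * t)))) ≤ 12 * π := by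
    refine sqrt_le_iff.2 ⟨by positivity, ?_⟩
    calc 128 * π ^ 2 / (1 + exp (-(2 * t))) ≤ 128 * π ^ 2 :=
          div_le_self (by positivity) (by linarith [exp_pos (-(2 * t))])
      _ ≤ (12 * π) ^ 2 := by linarith [sq_nonneg π]
  calc _ = π * √(128 * π ^ 2 / (1 + exp (-(2 * t)))) := by
        rw [← mass_sq, sqrt_div (x := π / (posRate t / 2) * (π / (velRate t / 2))) (by positivity),
          ← sqrt_mul (by positivity)]
        ring
    _ ≤ π * (12 * π) := by gcongr
    _ = 12 * π ^ 2 := by ring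

lemma eq_mul_exp_neg_phase (t : ℝ) (x v y u : E3) :
    G1ker t x v y u =
      (2 * π) ^ (-(6 : ℝ)) * (π / √(Dfun t)) ^ 3 * (exp (-phase t x v y u) * exp (-(2 * t))) := by
  rw [← exp_add, ← neg_add]
  rfl

lemma nonneg (t : ℝ) (x v y u : E3) : 0 ≤ G1ker t x v y u := by
  unfold G1ker
  positivity

lemma exists_lintegral_mul_polyWeight_le (q r : ℝ) :
    ∃ C : ℝ, 0 < C ∧ ∀ t : ℝ, 0 < t → ∀ x v : E3,
      ∫⁻ y : E3, ∫⁻ u : E3, ENNReal.ofReal (G1ker t x v y u * polyWeight q r y u) ≤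
        ENNReal.ofReal (C * ((1 + t) ^ |q| * exp (-(2 * t)) *
          (polyWeight q r x v * exp (-(dampRate t / 2 * ‖v‖ ^ 2))))) := by
  obtain ⟨K, hK, exp_bound⟩ := exists_exp_neg_phase_mul_polyWeight_le (E := E3) q r
  refine ⟨(2 * π) ^ (-(6 : ℝ)) * (12 * π ^ 2) ^ 3 * K, by positivity, fun t ht x v => ?_⟩
  have hw := (polyWeight_pos q r x v).le
  set N := (2 * π) ^ (-(6 : ℝ)) * (π / √(Dfun t)) ^ 3
  set B := N * exp (-(2 * t)) * (K * (1 + t) ^ |q| * polyWeight q r x v)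
  have hB : 0 ≤ B := by positivity
  have pointwise (y u : E3) : ENNReal.ofReal (G1ker t x v y u * polyWeight q r y u) ≤
      ENNReal.ofReal B * ENNReal.ofReal (exp (-(phase t x v y u / 2))) := by
    rw [← ENNReal.ofReal_mul hB]
    refine ENNReal.ofReal_le_ofReal ?_
    calc G1ker t x v y u * polyWeight q r y u
      _ = N * exp (-(2 * t)) * (exp (-phase t x v y u) * polyWeight q r y u) := by
          rw [eq_mul_exp_neg_phase]
          ring
      _ ≤ N * exp (-(2 * t)) *
            (K * (1 + t) ^ |q| * polyWeight q r x v * exp (-(phase t x v y u / 2))) :=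
          mul_le_mul_of_nonneg_left (exp_bound t ht x v y u) (by positivity)
      _ = B * exp (-(phase t x v y u / 2)) := by ring
  calc _ ≤ ∫⁻ y : E3, ∫⁻ u : E3,
          ENNReal.ofReal B * ENNReal.ofReal (exp (-(phase t x v y u / 2))) :=
        lintegral_mono fun y => lintegral_mono fun u => pointwise y u
    _ = ENNReal.ofReal (B * (exp (-(dampRate t / 2 * ‖v‖ ^ 2)) *
          (√(π / (posRate t / 2)) * √(π / (velRate t / 2))) ^ 3)) := by
        simp_rw [lintegral_const_mul' _ _ ENNReal.ofReal_ne_top]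
        rw [lintegral_exp_neg_half_phase ht, finrank_euclideanSpace_fin, ← ENNReal.ofReal_mul hB]
    _ = ENNReal.ofReal ((2 * π) ^ (-(6 : ℝ)) *
          (π / √(Dfun t) * (√(π / (posRate t / 2)) * √(π / (velRate t / 2)))) ^ 3 * K *
          ((1 + t) ^ |q| * exp (-(2 * t)) *
            (polyWeight q r x v * exp (-(dampRate t / 2 * ‖v‖ ^ 2))))) := by
        congr 1
        ring
    _ ≤ _ := by
        gcongr ENNReal.ofReal (_ * ?_ ^ 3 * _ * _)
        exact normalization_mul_sqrt_le ht

lemma polyWeight_mul_exp_neg_dampRate_le {E : Type*} [SeminormedAddCommGroup E] (q r : ℝ) {t : ℝ}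
    (ht : 0 < t) (x v : E) :
    polyWeight q r x v * exp (-(dampRate t / 2 * ‖v‖ ^ 2)) ≤
      6 * ((1 + t) * t ^ (-(1 / 2) : ℝ)) * polyWeight q (r - 1) x v := by
  set θ := dampRate t / 2 with hθ_def
  have hθ : 0 < θ := half_pos (dampRate_pos ht)
  have hw := (polyWeight_pos q (r - 1) x v).le
  have le_mul_θ : t ≤ (3 * (1 + t)) ^ 2 * θ := by
    have := (div_le_iff₀ (by positivity)).1 (le_four_mul_dampRate ht)
    nlinarith [mul_nonneg hθ.le (sq_nonneg (1 + t)), mul_nonneg hθ.le (sq_nonneg t)]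
  have sqrt_le : √t ≤ 3 * (1 + t) * √θ :=
    sqrt_le_iff.2 ⟨by positivity, by rwa [mul_pow, sq_sqrt hθ.le]⟩
  have two_div_le : 2 / √θ ≤ 6 * ((1 + t) * t ^ (-(1 / 2) : ℝ)) := by
    rw [rpow_neg ht.le, ← sqrt_eq_rpow, ← div_eq_mul_inv, ← mul_div_assoc,
      div_le_div_iff₀ (sqrt_pos.2 hθ) (sqrt_pos.2 ht)]
    linarith
  calc _ = polyWeight q (r - 1) x v * ((1 + ‖v‖) * exp (-(θ * ‖v‖ ^ 2))) := by
        rw [polyWeight_eq_mul, mul_assoc]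
    _ ≤ polyWeight q (r - 1) x v * (6 * ((1 + t) * t ^ (-(1 / 2) : ℝ))) := by
        gcongr polyWeight q (r - 1) x v * ?_
        exact (one_add_mul_exp_neg_mul_sq_le hθ (by linarith [dampRate_le t]) _).trans two_div_le
    _ = _ := mul_comm _ _

lemma exists_lintegral_mul_polyWeight_le_rpow_mul_exp (q r : ℝ) {β : ℝ} (hβ : β < 2) :
    ∃ C : ℝ, 0 < C ∧ ∀ t : ℝ, 0 < t → ∀ x v : E3,
      ∫⁻ y : E3, ∫⁻ u : E3, ENNReal.ofReal (G1ker t x v y u * polyWeight q r y u) ≤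
        ENNReal.ofReal
          (C * (t ^ (-(1 / 2) : ℝ) * exp (-(β * t)) * polyWeight q (r - 1) x v)) := by
  obtain ⟨C, hC, kernel_bound⟩ := exists_lintegral_mul_polyWeight_le q r
  obtain ⟨K, hK, absorb⟩ := exists_one_add_rpow_le_mul_exp (|q| + 1) (sub_pos.2 hβ)
  refine ⟨C * 6 * K, by positivity, fun t ht x v =>
    (kernel_bound t ht x v).trans (ENNReal.ofReal_le_ofReal ?_)⟩
  have hw := (polyWeight_pos q (r - 1) x v).le
  calc _ ≤ C * ((1 + t) ^ |q| * exp (-(2 * t)) *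
          (6 * ((1 + t) * t ^ (-(1 / 2) : ℝ)) * polyWeight q (r - 1) x v)) := by
        gcongr C * (_ * ?_)
        exact polyWeight_mul_exp_neg_dampRate_le q r ht x v
    _ = C * 6 * ((1 + t) ^ (|q| + 1) * exp (-(2 * t))) *
          (t ^ (-(1 / 2) : ℝ) * polyWeight q (r - 1) x v) := by
        rw [rpow_add_one (by positivity)]
        ring
    _ ≤ C * 6 * (K * exp ((2 - β) * t) * exp (-(2 * t))) *
          (t ^ (-(1 / 2) : ℝ) * polyWeight q (r - 1) x v) := by
        gcongr
        exact absorb t ht.le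
    _ = _ := by
        rw [mul_assoc K, ← exp_add, show (2 - β) * t + -(2 * t) = -(β * t) by ring]
        ring

lemma exists_enorm_integral_mul_le (q r : ℝ) {β : ℝ} (hβ : β < 2) :
    ∃ C : ℝ, 0 < C ∧ ∀ (f : E3 → E3 → ℝ) (M : ℝ), (∀ y u, |f y u| ≤ M * polyWeight q r y u) →
      ∀ t : ℝ, 0 < t → ∀ x v : E3,
        ‖∫ y : E3, ∫ u : E3, G1ker t x v y u * f y u‖ₑ ≤ ENNReal.ofReal
          (M * (C * (t ^ (-(1 / 2) : ℝ) * exp (-(β * t)) * polyWeight q (r - 1) x v))) := by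
  obtain ⟨C, hC, kernel_bound⟩ := exists_lintegral_mul_polyWeight_le_rpow_mul_exp q r hβ
  refine ⟨C, hC, fun f M hf t ht x v => ?_⟩
  have hM : 0 ≤ M :=
    nonneg_of_mul_nonneg_left ((abs_nonneg _).trans (hf x v)) (polyWeight_pos q r x v)
  have pointwise (y u : E3) : ‖G1ker t x v y u * f y u‖ₑ ≤
      ENNReal.ofReal M * ENNReal.ofReal (G1ker t x v y u * polyWeight q r y u) := by
    rw [enorm_eq_ofReal_abs, abs_mul, abs_of_nonneg (nonneg t x v y u), ← ENNReal.ofReal_mul hM,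
      mul_left_comm M]
    exact ENNReal.ofReal_le_ofReal (mul_le_mul_of_nonneg_left (hf y u) (nonneg t x v y u))
  calc _ ≤ ∫⁻ y : E3, ∫⁻ u : E3, ‖G1ker t x v y u * f y u‖ₑ :=
        (enorm_integral_le_lintegral_enorm _).trans
          (lintegral_mono fun y => enorm_integral_le_lintegral_enorm _)
    _ ≤ ∫⁻ y : E3, ∫⁻ u : E3,
          ENNReal.ofReal M * ENNReal.ofReal (G1ker t x v y u * polyWeight q r y u) :=
        lintegral_mono fun y => lintegral_mono fun u => pointwise y u
    _ = ENNReal.ofReal M *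
          ∫⁻ y : E3, ∫⁻ u : E3, ENNReal.ofReal (G1ker t x v y u * polyWeight q r y u) := by
        simp_rw [lintegral_const_mul' _ _ ENNReal.ofReal_ne_top]
    _ ≤ _ := by
        rw [ENNReal.ofReal_mul hM]
        gcongr
        exact kernel_bound t ht x v

end Integral

end G1ker

theorem G1_duhamel_decay_general {b κ : ℝ} (n γ : ℝ) (hb : b < 2) (hκ₀ : 0 ≤ κ) (hκ : κ ≤ 1 / 2) :
    ∃ C : ℝ, 0 < C ∧ ∀ F : ℝ → E3 → E3 → ℝ,
      (∀ s : ℝ, 0 < s → ∀ y u : E3,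
        |F s y u| ≤ s ^ (-κ) * exp (-(b * s)) * (1 + ‖y‖ ^ 2) ^ (-n) * (1 + ‖u‖) ^ (-γ)) →
      ∀ t : ℝ, 0 < t → ∀ x v : E3,
        |∫ s in Set.Ioo (0 : ℝ) t, ∫ y : E3, ∫ u : E3, G1ker (t - s) x v y u * F s y u| ≤
          C * exp (-(b * t)) * (1 + ‖x‖ ^ 2) ^ (-n) * (1 + ‖v‖) ^ (-(γ + 1)) := by
  obtain ⟨β, hbβ, hβ⟩ := exists_between hb
  obtain ⟨C₁, hC₁, space_bound⟩ := G1ker.exists_enorm_integral_mul_le (-n) (-γ) hβ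
  obtain ⟨C₂, hC₂, time_bound⟩ :=
    exists_setLIntegral_Ioo_rpow_neg_mul_le hκ₀ hκ (sub_pos.2 hbβ)
  refine ⟨C₁ * C₂, by positivity, fun F hF t ht x v => ?_⟩
  set A := C₁ * exp (-(b * t)) * polyWeight (-n) (-γ - 1) x v with hA_def
  have hA : 0 ≤ A := mul_nonneg (by positivity) (polyWeight_pos _ _ x v).le
  have slice_bound : ∀ s ∈ Set.Ioo 0 t,
      ‖∫ y : E3, ∫ u : E3, G1ker (t - s) x v y u * F s y u‖ₑ ≤ ENNReal.ofReal A *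
        ENNReal.ofReal (s ^ (-κ) * ((t - s) ^ (-(1 / 2) : ℝ) * exp (-((β - b) * (t - s))))) := by
    intro s ⟨hs, hst⟩
    have exp_split : exp (-(b * s)) * exp (-(β * (t - s))) =
        exp (-(b * t)) * exp (-((β - b) * (t - s))) := by
      rw [← exp_add, ← exp_add]
      ring_nf
    refine (space_bound (F s) (s ^ (-κ) * exp (-(b * s))) (fun y u => ?_) (t - s)
      (sub_pos.2 hst) x v).trans_eq ?_
    · simpa only [polyWeight, mul_assoc] using hF s hs y u
    · rw [← ENNReal.ofReal_mul hA]
      congr 1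
      linear_combination (s ^ (-κ) * (C₁ * ((t - s) ^ (-(1 / 2) : ℝ) *
        polyWeight (-n) (-γ - 1) x v))) * exp_split
  have enorm_bound : ‖∫ s in Set.Ioo 0 t, ∫ y : E3, ∫ u : E3, G1ker (t - s) x v y u * F s y u‖ₑ ≤
      ENNReal.ofReal (A * C₂) :=
    calc _ ≤ _ := (enorm_integral_le_lintegral_enorm _).trans
          (setLIntegral_mono' measurableSet_Ioo slice_bound)
      _ ≤ ENNReal.ofReal A * ENNReal.ofReal C₂ := by
          rw [lintegral_const_mul' _ _ ENNReal.ofReal_ne_top]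
          gcongr
          exact time_bound t ht
      _ = ENNReal.ofReal (A * C₂) := (ENNReal.ofReal_mul hA).symm
  rw [enorm_eq_ofReal_abs, ENNReal.ofReal_le_ofReal_iff (by positivity)] at enorm_bound
  refine enorm_bound.trans_eq ?_
  rw [hA_def, polyWeight, neg_add']
  ring

/-- Pointwise decay of the Duhamel integral `∫₀ᵗ G₁(t-s) * F(s) ds`
(estimate (4.4) of Lemma 4.2). -/
theorem G1_duhamel_decay (b n γ : ℝ) (hb0 : 0 < b) (hb2 : b < 2)
    (hn : 0 ≤ n) (hγ : 0 ≤ γ) (k : ℕ) (hk : k ≤ 1) :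
    ∃ C : ℝ, 0 < C ∧ ∀ F : ℝ → E3 → E3 → ℝ,
      (∀ s : ℝ, 0 < s → ∀ y u : E3,
        |F s y u| ≤ s ^ (-(k : ℝ) / 2) * Real.exp (-(b * s)) *
          (1 + ‖y‖ ^ 2) ^ (-n) * (1 + ‖u‖) ^ (-γ)) →
      ∀ t : ℝ, 0 < t → ∀ x v : E3,
        |∫ s in Set.Ioo (0 : ℝ) t, ∫ y : E3, ∫ u : E3, G1ker (t - s) x v y u * F s y u| ≤
          C * Real.exp (-(b * t)) * (1 + ‖x‖ ^ 2) ^ (-n) * (1 + ‖v‖) ^ (-(γ + 1)) := by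
  have hk' : (k : ℝ) / 2 ≤ 1 / 2 := by gcongr; exact_mod_cast hk
  simpa only [neg_div] using G1_duhamel_decay_general n γ hb2 (by positivity) hk'

end
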